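/- arXiv:2304.10795 — 2 statements merged into one kernel-verified Lean document; each statement's English description precedes it below -/
import Mathlib

section
/- If Ŝ is a Neumann subgroup of M̂ = PGL(2,ℤ) not contained in M = PSL(2,ℤ) and Ŝ has (k,l,m)-structure for k, l, m ∈ ℕ ∪ {∞}, then the subgroup S = Ŝ ∩ M has (2k, 2l, 2m−1)-structure. -/
open Matrix Pointwise

noncomputable section

abbrev GL2Z := Matrix.GeneralLinearGroup (Fin 2) ℤ

/-- The subgroup {±I} of GL(2,ℤ), which is its center. -/
def pmI : Subgroup GL2Z := Subgroup.zpowers (-1)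

instance pmI_normal : pmI.Normal := by
  constructor
  rintro n hn g
  obtain ⟨k, hk⟩ := Subgroup.mem_zpowers_iff.mp hn
  have hc : Commute ((-1 : GL2Z) ^ k) g := (Commute.neg_one_left g).zpow_left k
  have : g * n * g⁻¹ = n := by
    rw [← hk, ← hc.eq]; group
  rw [this]; exact hn

/-- The extended modular group PGL(2,ℤ) = GL(2,ℤ)/{±I}. -/
abbrev Mhat := GL2Z ⧸ pmI

def pr : GL2Z →* Mhat := QuotientGroup.mk' pmI

def tauGL : GL2Z := ⟨!![1,1;0,1], !![1,-1;0,1], by decide, by decide⟩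
def nuGL : GL2Z := ⟨!![-1,0;0,1], !![-1,0;0,1], by decide, by decide⟩
def omegaGL : GL2Z := ⟨!![0,-1;1,0], !![0,1;-1,0], by decide, by decide⟩
def phiGL : GL2Z := ⟨!![0,-1;1,1], !![1,1;-1,0], by decide, by decide⟩

/-- τ, the class of [[1,1],[0,1]]. -/
def tau : Mhat := pr tauGL
/-- ν, the class of [[-1,0],[0,1]]. -/
def nu : Mhat := pr nuGL
/-- ω, the class of [[0,-1],[1,0]]. -/
def omega : Mhat := pr omegaGL
/-- φ, the class of [[0,-1],[1,1]]. -/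
def phi : Mhat := pr phiGL

/-- T̂ = ⟨τ, ν⟩, the stabilizer of ∞. -/
def That : Subgroup Mhat := Subgroup.closure {tau, nu}

/-- A Neumann subgroup of the extended modular group: a complement of T̂. -/
def IsNeumann (S : Subgroup Mhat) : Prop :=
  (S : Set Mhat) * (That : Set Mhat) = Set.univ ∧ S ⊓ That = ⊥

/-- The modular group PSL(2,ℤ), as the subgroup of PGL(2,ℤ) of classes of
matrices of determinant one. -/
def Msub : Subgroup Mhat :=
  Subgroup.map pr (MonoidHom.ker (Matrix.GeneralLinearGroup.det))

/-- `G` is a free product of `k` groups of order 2, `l` groups of order 3 and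
`m` infinite cyclic groups (cardinalities measured in `ℕ∞`). -/
def HasKLMStructure (G : Type) [Group G] (k l m : ℕ∞) : Prop :=
  ∃ (ι : Type) (H : ι → Type) (inst : ∀ i, Group (H i)),
    letI := inst
    Nonempty (G ≃* Monoid.CoprodI H) ∧
    (∀ i, Nonempty (H i ≃* Multiplicative (ZMod 2)) ∨
      Nonempty (H i ≃* Multiplicative (ZMod 3)) ∨
      Nonempty (H i ≃* Multiplicative ℤ)) ∧
    {i | Nonempty (H i ≃* Multiplicative (ZMod 2))}.encard = k ∧
    {i | Nonempty (H i ≃* Multiplicative (ZMod 3))}.encard = l ∧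
    {i | Nonempty (H i ≃* Multiplicative ℤ)}.encard = m


section L1

/-- index family for the kernel -/
def KFam {J : Type} (H : J → Type) : Option (J × Bool) → Type
  | none => Multiplicative ℤ
  | some p => H p.1

instance KFam.grp {J : Type} (H : J → Type) [inst : ∀ j, Group (H j)] : ∀ x, Group (KFam H x)
  | none => (inferInstance : Group (Multiplicative ℤ))
  | some p => inst p.1

variable {J : Type} {H : J → Type} [∀ j, Group (H j)] {G : Type} [Group G]

def kof (H : J → Type) [∀ j, Group (H j)] (j : J) (b : Bool) :
    H j →* Monoid.CoprodI (KFam H) :=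
  Monoid.CoprodI.of (M := KFam H) (i := some (j, b))

def kz (H : J → Type) [∀ j, Group (H j)] : Monoid.CoprodI (KFam H) :=
  Monoid.CoprodI.of (M := KFam H) (i := none) (Multiplicative.ofAdd (1 : ℤ))

def klift {P : Type} [Group P] (a : ∀ j, Bool → (H j →* P)) (p : P) :
    Monoid.CoprodI (KFam H) →* P :=
  Monoid.CoprodI.lift (fun x => match x with
    | none => (zpowersHom P p : Multiplicative ℤ →* P)
    | some q => (a q.1 q.2 : H q.1 →* P))

lemma klift_of {P : Type} [Group P] (a : ∀ j, Bool → (H j →* P)) (p : P) (j : J) (b : Bool)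
    (h : H j) : klift a p (kof H j b h) = a j b h := by
  unfold klift kof
  exact Monoid.CoprodI.lift_of (M := KFam H) _ _

lemma klift_z {P : Type} [Group P] (a : ∀ j, Bool → (H j →* P)) (p : P) :
    klift a p (kz H) = p := by
  unfold klift kz
  refine (Monoid.CoprodI.lift_of (M := KFam H) _ _).trans ?_
  exact zpow_one p

lemma kext {P : Type} [Group P] {f g : Monoid.CoprodI (KFam H) →* P}
    (h1 : ∀ j b h, f (kof H j b h) = g (kof H j b h)) (h2 : f (kz H) = g (kz H)) : f = g := by
  apply Monoid.CoprodI.ext_hom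
  rintro (_ | ⟨j, b⟩)
  · apply MonoidHom.ext_mint
    exact h2
  · ext h
    exact h1 j b h

def ksig (H : J → Type) [∀ j, Group (H j)] :
    Monoid.CoprodI (KFam H) →* Monoid.CoprodI (KFam H) :=
  klift (fun j b => if b then (MulAut.conj (kz H)).toMonoidHom.comp (kof H j false)
    else kof H j true) (kz H)

lemma ksig_ff (j : J) (h : H j) : ksig H (kof H j false h) = kof H j true h := by
  simp [ksig, klift_of]
lemma ksig_tt (j : J) (h : H j) :
    ksig H (kof H j true h) = kz H * kof H j false h * (kz H)⁻¹ := by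
  simp [ksig, klift_of]
lemma ksig_z : ksig H (kz H) = kz H := by
  simp [ksig, klift_z]

lemma ksig_sq (n : Monoid.CoprodI (KFam H)) : ksig H (ksig H n) = kz H * n * (kz H)⁻¹ := by
  have : (ksig H).comp (ksig H) = (MulAut.conj (kz H)).toMonoidHom := by
    apply kext
    · rintro j (_ | _) h <;> simp [ksig_ff, ksig_tt, ksig_z]
    · simp [ksig_z]
  simpa using DFunLike.congr_fun this n

def kT0 (H : J → Type) [∀ j, Group (H j)] (x : Monoid.CoprodI (KFam H) × Bool) :
    Monoid.CoprodI (KFam H) × Bool :=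
  if x.2 then (ksig H x.1 * kz H, false) else (ksig H x.1, true)

lemma kT0_sq (x : Monoid.CoprodI (KFam H) × Bool) : kT0 H (kT0 H x) = (kz H * x.1, x.2) := by
  rcases x with ⟨n, _ | _⟩ <;> simp [kT0, ksig_sq, ksig_z]

def kT (H : J → Type) [∀ j, Group (H j)] : Equiv.Perm (Monoid.CoprodI (KFam H) × Bool) :=
  Equiv.ofBijective (kT0 H) (by
    constructor
    · intro x y h
      have := congrArg (kT0 H) h
      rw [kT0_sq, kT0_sq] at this
      ext <;> simp_all
    · intro y
      refine ⟨kT0 H ((kz H)⁻¹ * y.1, y.2), ?_⟩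
      rw [kT0_sq]; simp)

lemma kT_apply (x : Monoid.CoprodI (KFam H) × Bool) : kT H x = kT0 H x := rfl

def kL (H : J → Type) [∀ j, Group (H j)] :
    Monoid.CoprodI (KFam H) →* Equiv.Perm (Monoid.CoprodI (KFam H) × Bool) where
  toFun n := (Equiv.mulLeft n).prodCongr (Equiv.refl _)
  map_one' := by ext x <;> simp
  map_mul' a b := by ext x <;> simp [mul_assoc]

lemma kL_apply (n : Monoid.CoprodI (KFam H)) (x) : kL H n x = (n * x.1, x.2) := rfl

theorem kernel_iso (e : ∀ j, H j →* G) (t : G)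
    (huniv : ∀ (P : Type) [Group P] (a : ∀ j, H j →* P) (p : P),
      ∃ f : G →* P, (∀ j h, f (e j h) = a j h) ∧ f t = p)
    (hgen : ∀ S : Subgroup G, (∀ j h, e j h ∈ S) → t ∈ S → S = ⊤)
    (K : Subgroup G) (hK : ∀ a b, a * b ∈ K ↔ (a ∈ K ↔ b ∈ K))
    (he : ∀ j h, e j h ∈ K) (ht : t ∉ K) :
    Nonempty (K ≃* Monoid.CoprodI (KFam H)) := by
  obtain ⟨A, hA1, hA2⟩ := huniv (Equiv.Perm (Monoid.CoprodI (KFam H) × Bool))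
    (fun j => (kL H).comp (kof H j false)) (kT H)
  let f : Monoid.CoprodI (KFam H) →* G :=
    klift (fun j b => if b then (MulAut.conj t).toMonoidHom.comp (e j) else e j) (t * t)
  have f_ff : ∀ j h, f (kof H j false h) = e j h := fun j h => by simp [f, klift_of]
  have f_tt : ∀ j h, f (kof H j true h) = t * e j h * t⁻¹ := fun j h => by simp [f, klift_of]
  have f_z : f (kz H) = t * t := by simp [f, klift_z]
  have hTT : kT H * kT H = kL H (kz H) := by
    ext1 x; rw [Equiv.Perm.mul_apply, kT_apply, kT_apply, kT0_sq, kL_apply]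
  have hTL : ∀ n, kT H * kL H n = kL H (ksig H n) * kT H := by
    intro n; ext1 ⟨x, b⟩
    rw [Equiv.Perm.mul_apply, Equiv.Perm.mul_apply, kL_apply, kL_apply, kT_apply, kT_apply]
    cases b <;> simp [kT0, mul_assoc]
  have hAf : A.comp f = kL H := by
    apply kext
    · rintro j (_ | _) h
      · simp [f_ff, hA1]
      · simp only [MonoidHom.comp_apply, f_tt, map_mul, map_inv, hA1, hA2]
        rw [hTL, ksig_ff]; simp
    · simp [f_z, hA2, hTT]
  have hAf' : ∀ n, A (f n) = kL H n := fun n => DFunLike.congr_fun hAf n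
  have hfs : ∀ n, t * f n = f (ksig H n) * t := by
    intro n
    have : (MulAut.conj t).toMonoidHom.comp f = f.comp (ksig H) := by
      apply kext
      · rintro j (_ | _) h
        · simp [f_ff, f_tt, ksig_ff]
        · simp [f_ff, f_tt, f_z, ksig_tt, mul_assoc]
      · simp [f_z, ksig_z, mul_assoc]
    have := DFunLike.congr_fun this n
    simp at this
    rw [← this]; group
  let q : Monoid.CoprodI (KFam H) × Bool → G := fun x => f x.1 * (if x.2 then t else 1)
  let S : Subgroup G :=
    { carrier := {g | ∀ x, q (A g x) = g * q x}
      one_mem' := by intro x; simp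
      mul_mem' := by
        intro a b ha hb x
        rw [map_mul, Equiv.Perm.mul_apply, ha, hb, mul_assoc]
      inv_mem' := by
        intro a ha x
        have := ha (A a⁻¹ x)
        rw [← Equiv.Perm.mul_apply, ← map_mul, mul_inv_cancel, map_one, Equiv.Perm.one_apply] at this
        rw [this]; group }
  have hS : S = ⊤ := by
    apply hgen
    · intro j h x
      rw [← f_ff, hAf', kL_apply]
      simp [q, mul_assoc]
    · rintro ⟨n, b⟩
      rw [hA2, kT_apply]
      cases b
      · simp [q, kT0, hfs]
      · simp only [q, kT0, if_true, map_mul, f_z]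
        rw [← mul_assoc t, hfs]; simp [mul_assoc]
  have hfK : ∀ n, f n ∈ K := by
    have h1 : ∀ n, n ∈ K.comap f := by
      let f' : Monoid.CoprodI (KFam H) →* K :=
        klift (fun j b => (if b then (MulAut.conj t).toMonoidHom.comp (e j) else e j).codRestrict K
          (by
            intro h
            cases b
            · simpa using he j h
            · simp [hK, he])) ⟨t * t, by simp [hK]⟩
      have : K.subtype.comp f' = f := by
        apply kext
        · rintro j (_ | _) h <;> simp [f', f_ff, f_tt, klift_of]
        · simp [f', f_z, klift_z]
      intro n
      rw [← this]
      exact (f' n).2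
    exact h1
  refine ⟨(MulEquiv.ofBijective (f.codRestrict K hfK) ⟨?_, ?_⟩).symm⟩
  · intro a b hab
    have hab : f a = f b := congrArg Subtype.val hab
    have := congrArg (fun g => A g (1, false)) hab
    simpa [hAf', kL_apply] using this
  · rintro ⟨g, hg⟩
    have hgS : g ∈ S := by rw [hS]; trivial
    have h2 := hgS (1, false)
    generalize A g (1, false) = y at h2
    obtain ⟨n, b⟩ := y
    refine ⟨n, Subtype.ext ?_⟩
    cases b
    · simpa [q] using h2
    · exfalso
      have h3 : f n * t = g := by simpa [q] using h2
      rw [← h3, hK] at hg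
      exact ht (hg.1 (hfK n))

end L1

section L2

theorem free_data {ι : Type} {H : ι → Type} [∀ i, Group (H i)] {G : Type} [Group G]
    (φ : G ≃* Monoid.CoprodI H)
    (K : Subgroup G) (hK : ∀ a b, a * b ∈ K ↔ (a ∈ K ↔ b ∈ K))
    (hH : ∀ i, (∀ h : H i, φ.symm (Monoid.CoprodI.of h) ∈ K) ∨
      Nonempty (H i ≃* Multiplicative ℤ))
    (hne : K ≠ ⊤) :
    ∃ i0 : ι, Nonempty (H i0 ≃* Multiplicative ℤ) ∧
      Nonempty (K ≃* Monoid.CoprodI (KFam (fun j : {i // i ≠ i0} => H j.1))) := by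
  classical
  have gen : ∀ S : Subgroup G, (∀ i (h : H i), φ.symm (Monoid.CoprodI.of h) ∈ S) → S = ⊤ := by
    intro S hS
    rw [eq_top_iff]
    intro g _
    obtain ⟨x, rfl⟩ := φ.symm.surjective g
    induction x using Monoid.CoprodI.induction_on with
    | one => simp
    | of i m => exact hS i m
    | mul x y hx hy => rw [map_mul]; exact S.mul_mem (hx trivial) (hy trivial)
  obtain ⟨i0, h0⟩ : ∃ i0, ∃ h : H i0, φ.symm (Monoid.CoprodI.of h) ∉ K := by
    by_contra! hc
    exact hne (gen K hc)
  obtain ⟨ψ⟩ : Nonempty (H i0 ≃* Multiplicative ℤ) := by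
    rcases hH i0 with h | h
    · obtain ⟨x, hx⟩ := h0; exact absurd (h x) hx
    · exact h
  refine ⟨i0, ⟨ψ⟩, ?_⟩
  -- generic fact: a copy of the integers is generated by its generator
  have zgen : ∀ i (θ : H i ≃* Multiplicative ℤ) (S : Subgroup G),
      φ.symm (Monoid.CoprodI.of (θ.symm (Multiplicative.ofAdd 1))) ∈ S →
      ∀ h : H i, φ.symm (Monoid.CoprodI.of h) ∈ S := by
    intro i θ S hS h
    obtain ⟨x, rfl⟩ := θ.symm.surjective h
    have : x = (Multiplicative.ofAdd (1 : ℤ)) ^ (Multiplicative.toAdd x) := by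
      rw [← ofAdd_zsmul]; simp
    rw [this, map_zpow, map_zpow, map_zpow]
    exact S.zpow_mem hS _
  let t : G := φ.symm (Monoid.CoprodI.of (ψ.symm (Multiplicative.ofAdd 1)))
  have ht : t ∉ K := by
    intro h
    obtain ⟨x, hx⟩ := h0
    exact hx (zgen i0 ψ K h x)
  -- for each index a modified embedding
  have key : ∀ j : {i // i ≠ i0}, ∃ e : H j.1 →* G, (∀ h, e h ∈ K) ∧
      (∀ S : Subgroup G, t ∈ S → (∀ h, e h ∈ S) → ∀ h : H j.1, φ.symm (Monoid.CoprodI.of h) ∈ S) ∧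
      (∀ (P : Type) [Group P] (a : H j.1 →* P) (p : P), ∃ b : H j.1 →* P,
        ∀ f : G →* P, f t = p → (∀ h : H j.1, f (φ.symm (Monoid.CoprodI.of h)) = b h) →
          ∀ h, f (e h) = a h) := by
    intro j
    by_cases hj : ∀ h : H j.1, φ.symm (Monoid.CoprodI.of h) ∈ K
    · refine ⟨φ.symm.toMonoidHom.comp Monoid.CoprodI.of, hj, fun S _ h => h, ?_⟩
      intro P _ a p
      exact ⟨a, fun f _ h => h⟩
    · obtain ⟨θ⟩ := (hH j.1).resolve_left hj
      have hx : φ.symm (Monoid.CoprodI.of (θ.symm (Multiplicative.ofAdd 1))) ∉ K :=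
        fun h => hj (zgen _ θ K h)
      set x : G := φ.symm (Monoid.CoprodI.of (θ.symm (Multiplicative.ofAdd 1))) with hxdef
      have e1 : ∀ (P : Type) [Group P] (p : P),
          ((zpowersHom P p).comp θ.toMonoidHom) (θ.symm (Multiplicative.ofAdd 1)) = p := by
        intro P _ p; simp [zpowersHom_apply]
      refine ⟨(zpowersHom G (x * t)).comp θ.toMonoidHom, ?_, ?_, ?_⟩
      · intro h
        simp only [MonoidHom.comp_apply, zpowersHom_apply]
        exact K.zpow_mem ((hK _ _).2 (by simp [hx, ht])) _
      · intro S hS h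
        apply zgen _ θ
        have := h (θ.symm (Multiplicative.ofAdd 1))
        rw [e1] at this
        exact (S.mul_mem_cancel_right hS).1 this
      · intro P _ a p
        refine ⟨(zpowersHom P (a (θ.symm (Multiplicative.ofAdd 1)) * p⁻¹)).comp θ.toMonoidHom, ?_⟩
        intro f hf h
        have hfx : f x = a (θ.symm (Multiplicative.ofAdd 1)) * p⁻¹ := by
          rw [hxdef, h, e1]
        have : ((f.comp ((zpowersHom G (x * t)).comp θ.toMonoidHom)).comp θ.symm.toMonoidHom)
            = a.comp θ.symm.toMonoidHom := by
          apply MonoidHom.ext_mint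
          have := e1 G (x * t)
          simp only [MonoidHom.comp_apply] at this ⊢
          change f ((zpowersHom G (x * t)) (θ.toMonoidHom (θ.symm (Multiplicative.ofAdd 1)))) = _
          rw [this, map_mul, hfx, hf]
          simp
        intro y
        have := DFunLike.congr_fun this (θ y)
        simpa using this
  choose e he1 he2 he3 using key
  refine kernel_iso e t ?_ ?_ K hK he1 ht
  · intro P _ a p
    choose b hb using fun j => he3 j P (a j) p
    let c : ∀ i, H i →* P := fun i =>
      if hi : i = i0 then (zpowersHom P p).comp (hi ▸ ψ : H i ≃* Multiplicative ℤ).toMonoidHom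
      else b ⟨i, hi⟩
    let f : G →* P := (Monoid.CoprodI.lift c).comp φ.toMonoidHom
    have ff : ∀ i (h : H i), f (φ.symm (Monoid.CoprodI.of h)) = c i h := by
      intro i h; simp [f]
    have hft : f t = p := by
      simp only [t, ff, c]
      simp [zpowersHom_apply]
    refine ⟨f, ?_, hft⟩
    intro j h
    apply hb j f hft
    intro h
    rw [ff]
    simp [c, j.2]
  · intro S hS htS
    apply gen
    intro i
    by_cases hi : i = i0
    · subst hi
      exact zgen _ ψ S htS
    · exact he2 ⟨i, hi⟩ S htS (hS ⟨i, hi⟩)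

end L2

section Count

variable {ι : Type} {i0 : ι} (P : ι → Prop) (Q : Option ({i // i ≠ i0} × Bool) → Prop)

lemma count_base :
    (some '' ((Subtype.val ⁻¹' {i | P i} : Set {i // i ≠ i0}) ×ˢ (Set.univ : Set Bool))).encard
      = 2 * ({i | P i} \ {i0}).encard := by
  rw [(Option.some_injective _).encard_image, Set.encard_prod, mul_comm]
  congr 1
  · simp [Set.encard_pair]
  · rw [← Subtype.val_injective.encard_image]
    congr 1
    ext i
    simp

lemma count_none (hQ : ∀ p, Q (some p) ↔ P p.1.1) (hn : ¬ Q none) (h0 : ¬ P i0) :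
    {x | Q x}.encard = 2 * {i | P i}.encard := by
  have h1 : {i | P i} \ {i0} = {i | P i} := by
    apply Set.sdiff_singleton_eq_self
    exact h0
  have := count_base (i0 := i0) P
  rw [h1] at this
  rw [← this]
  congr 1
  ext x
  rcases x with _ | ⟨j, b⟩
  · simpa using hn
  · simp [hQ]

lemma count_some (hQ : ∀ p, Q (some p) ↔ P p.1.1) (hn : Q none) (h0 : P i0) :
    {x | Q x}.encard = 2 * {i | P i}.encard - 1 := by
  have h1 : {i | P i}.encard = ({i | P i} \ {i0}).encard + 1 :=
    (Set.encard_sdiff_singleton_add_one (a := i0) (s := {i | P i}) h0).symm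
  have h2 : {x | Q x} = insert none (some ''
      ((Subtype.val ⁻¹' {i | P i} : Set {i // i ≠ i0}) ×ˢ (Set.univ : Set Bool))) := by
    ext x
    rcases x with _ | ⟨j, b⟩
    · simpa using hn
    · simp [hQ]
  rw [h2, Set.encard_insert_of_notMem (by simp), count_base, h1]
  generalize ({i | P i} \ {i0}).encard = a
  cases a with
  | top => rfl
  | coe n =>
    norm_cast

end Count

section Mat

lemma pr_eq_one {g : GL2Z} (h : pr g = 1) : g = 1 ∨ g = -1 := by
  have h : g ∈ pmI := (QuotientGroup.eq_one_iff g).1 h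
  obtain ⟨k, rfl⟩ := Subgroup.mem_zpowers_iff.mp h
  rcases Int.even_or_odd k with h | h
  · left; exact h.neg_one_zpow
  · right; exact h.neg_one_zpow

lemma pr_neg (g : GL2Z) : pr (-g) = pr g := by
  have : pr (-1) = 1 := (QuotientGroup.eq_one_iff (-1 : GL2Z)).2 (Subgroup.mem_zpowers _)
  rw [← neg_one_mul, map_mul, this, one_mul]

lemma det_neg_GL (g : GL2Z) : Matrix.GeneralLinearGroup.det (-g) = Matrix.GeneralLinearGroup.det g := by
  ext
  simp [Matrix.det_fin_two]

lemma pr_mem_Msub (g : GL2Z) : pr g ∈ Msub ↔ Matrix.GeneralLinearGroup.det g = 1 := by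
  constructor
  · rintro ⟨h, hh, hp⟩
    have hh : Matrix.GeneralLinearGroup.det h = 1 := hh
    have : pr (h⁻¹ * g) = 1 := by rw [map_mul, map_inv, hp]; simp
    rcases pr_eq_one this with h1 | h1
    · rw [← inv_mul_eq_one.1 h1]; exact hh
    · have : g = -h := by
        rw [inv_mul_eq_iff_eq_mul] at h1; simpa using h1
      rw [this, det_neg_GL, hh]
  · intro h
    exact ⟨g, h, rfl⟩

lemma pr_surj (s : Mhat) : ∃ g, pr g = s := QuotientGroup.mk'_surjective _ s

lemma Msub_mul (a b : Mhat) : a * b ∈ Msub ↔ (a ∈ Msub ↔ b ∈ Msub) := by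
  obtain ⟨a, rfl⟩ := pr_surj a
  obtain ⟨b, rfl⟩ := pr_surj b
  rw [← map_mul, pr_mem_Msub, pr_mem_Msub, pr_mem_Msub, map_mul]
  rcases Int.units_eq_one_or (Matrix.GeneralLinearGroup.det a) with h | h <;>
  rcases Int.units_eq_one_or (Matrix.GeneralLinearGroup.det b) with h' | h' <;>
  rw [h, h'] <;> decide

lemma tau_zpow (n : ℤ) : ((tauGL ^ n : GL2Z) : Matrix (Fin 2) (Fin 2) ℤ) = !![1, n; 0, 1] := by
  have h1 : (tauGL : Matrix (Fin 2) (Fin 2) ℤ) = !![1, 1; 0, 1] := rfl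
  have h2 : ((tauGL⁻¹ : GL2Z) : Matrix (Fin 2) (Fin 2) ℤ) = !![1, -1; 0, 1] := rfl
  induction n using Int.induction_on with
  | zero => simp [Matrix.one_fin_two]
  | succ i ih =>
    rw [_root_.zpow_add_one, Units.val_mul, ih, h1]
    simp [add_comm]
  | pred i ih =>
    rw [_root_.zpow_sub_one, Units.val_mul, ih, h2]
    simp; ring

lemma tri_mem (g : GL2Z) (h : g 1 0 = 0) : pr g ∈ That := by
  have key : ∀ g : GL2Z, g 1 0 = 0 → g 1 1 = 1 → pr g ∈ That := by
    intro g h h'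
    have ht : tau ∈ That := Subgroup.subset_closure (by simp)
    have hn : nu ∈ That := Subgroup.subset_closure (by simp)
    have hu : IsUnit (g : Matrix (Fin 2) (Fin 2) ℤ).det := (Matrix.GeneralLinearGroup.det g).isUnit
    rw [Matrix.det_fin_two, h, h'] at hu
    simp only [mul_one, mul_zero, sub_zero] at hu
    rcases Int.isUnit_iff.1 hu with h0 | h0
    · have : g = tauGL ^ (g 0 1) := by
        apply Units.ext
        rw [tau_zpow]
        ext i j
        fin_cases i <;> fin_cases j <;> simp [h, h', h0]
      rw [this, map_zpow]
      exact That.zpow_mem ht _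
    · have : g = tauGL ^ (g 0 1) * nuGL := by
        apply Units.ext
        rw [Units.val_mul, tau_zpow]
        have h1 : (nuGL : Matrix (Fin 2) (Fin 2) ℤ) = !![-1, 0; 0, 1] := rfl
        rw [h1]
        ext i j
        fin_cases i <;> fin_cases j <;> simp [h, h', h0]
      rw [this, map_mul, map_zpow]
      exact That.mul_mem (That.zpow_mem ht _) hn
  have hu : IsUnit (g : Matrix (Fin 2) (Fin 2) ℤ).det := (Matrix.GeneralLinearGroup.det g).isUnit
  rw [Matrix.det_fin_two, h] at hu
  simp only [mul_zero, sub_zero] at hu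
  rcases Int.isUnit_iff.1 (isUnit_of_mul_isUnit_right hu) with h0 | h0
  · exact key g h h0
  · rw [← pr_neg]
    apply key
    · simp [h]
    · simp [h0]

lemma refl_conj (g : GL2Z) (hd : Matrix.GeneralLinearGroup.det g ≠ 1) (hg : pr g * pr g = 1) :
    ∃ h : GL2Z, pr (h⁻¹ * g * h) ∈ That := by
  have hd : (g : Matrix (Fin 2) (Fin 2) ℤ).det = -1 := by
    have := (Int.units_eq_one_or (Matrix.GeneralLinearGroup.det g)).resolve_left hd
    have := congrArg Units.val this
    simpa using this
  rw [Matrix.det_fin_two] at hd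
  have hg' : ∃ z : ℤ, (z = 1 ∨ z = -1) ∧
      (g : Matrix (Fin 2) (Fin 2) ℤ) * (g : Matrix (Fin 2) (Fin 2) ℤ) = !![z, 0; 0, z] := by
    rw [← map_mul] at hg
    rcases pr_eq_one hg with h | h
    · refine ⟨1, Or.inl rfl, ?_⟩
      rw [← Units.val_mul, h, Units.val_one, Matrix.one_fin_two]
    · refine ⟨-1, Or.inr rfl, ?_⟩
      rw [← Units.val_mul, h, Units.val_neg, Units.val_one, Matrix.one_fin_two]
      simp
  obtain ⟨z, hz, hsq⟩ := hg'
  have e00 := congrFun (congrFun hsq 0) 0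
  have e01 := congrFun (congrFun hsq 0) 1
  have e10 := congrFun (congrFun hsq 1) 0
  have e11 := congrFun (congrFun hsq 1) 1
  simp only [Matrix.mul_apply, Fin.sum_univ_two, Matrix.of_apply, Matrix.cons_val', Matrix.cons_val_zero,
    Matrix.cons_val_one, Matrix.cons_val_fin_one] at e00 e01 e10 e11
  by_cases hc : g 1 0 = 0
  · exact ⟨1, by simpa using tri_mem g hc⟩
  have htr : g 1 1 = - g 0 0 := by
    have : g 1 0 * (g 0 0 + g 1 1) = 0 := by linarith
    have := (mul_eq_zero.1 this).resolve_left hc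
    linarith
  rw [htr] at hd
  have hpos : 0 < Int.gcd (g 0 0 + 1) (g 1 0) := Int.gcd_pos_of_ne_zero_right _ hc
  obtain ⟨p, r, hpr, hp, hr⟩ := Int.exists_gcd_one hpos
  obtain ⟨x, y, hxy⟩ := Int.isCoprime_iff_gcd_eq_one.2 hpr
  set d : ℤ := (Int.gcd (g 0 0 + 1) (g 1 0) : ℤ) with hdd
  have hd0 : d ≠ 0 := by rw [hdd]; exact_mod_cast hpos.ne'
  -- the vector (p, r) is fixed by g
  have f1 : g 0 0 * p + g 0 1 * r = p := by
    apply mul_right_cancel₀ hd0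
    have : g 0 0 * (p * d) + g 0 1 * (r * d) = p * d := by
      rw [← hp, ← hr]; linarith
    linarith
  have f2 : g 1 0 * p - g 0 0 * r = r := by
    apply mul_right_cancel₀ hd0
    have : g 1 0 * (p * d) - g 0 0 * (r * d) = r * d := by
      rw [← hp, ← hr]; ring
    linarith
  let h : GL2Z := ⟨!![p, -y; r, x], !![x, y; -r, p],
    by ext i j; fin_cases i <;> fin_cases j <;> simp <;> linarith,
    by ext i j; fin_cases i <;> fin_cases j <;> simp <;> linarith⟩
  refine ⟨h, tri_mem _ ?_⟩
  have h1 : (h : Matrix (Fin 2) (Fin 2) ℤ) = !![p, -y; r, x] := rfl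
  have h2 : ((h⁻¹ : GL2Z) : Matrix (Fin 2) (Fin 2) ℤ) = !![x, y; -r, p] := rfl
  rw [Units.val_mul, Units.val_mul, h1, h2]
  simp only [Matrix.mul_apply, Fin.sum_univ_two, Matrix.of_apply, Matrix.cons_val', Matrix.cons_val_zero,
    Matrix.cons_val_one, Matrix.cons_val_fin_one]
  rw [htr]
  linear_combination p * f2 - r * f1

lemma invol_mem (S : Subgroup Mhat) (hS : IsNeumann S) (s : Mhat) (hs : s ∈ S) (h : s * s = 1) :
    s ∈ Msub := by
  by_contra hc
  obtain ⟨g, rfl⟩ := pr_surj s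
  rw [pr_mem_Msub] at hc
  obtain ⟨x, hx⟩ := refl_conj g hc h
  obtain ⟨a, ha, t, ht, hat⟩ := Set.mem_mul.1 (hS.1.symm ▸ Set.mem_univ (pr x) :
    pr x ∈ (S : Set Mhat) * (That : Set Mhat))
  have h1 : a⁻¹ * pr g * a = t * pr (x⁻¹ * g * x) * t⁻¹ := by
    rw [map_mul, map_mul, map_inv, ← hat]; group
  have h2 : a⁻¹ * pr g * a ∈ S ⊓ That := by
    refine ⟨S.mul_mem (S.mul_mem (S.inv_mem ha) hs) ha, ?_⟩
    rw [h1]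
    exact That.mul_mem (That.mul_mem ht hx) (That.inv_mem ht)
  rw [hS.2, Subgroup.mem_bot] at h2
  have h3 : pr g = 1 := by
    have : pr g = a * (a⁻¹ * pr g * a) * a⁻¹ := by group
    rw [this, h2]; simp
  apply hc
  rw [← pr_mem_Msub, h3]
  exact Msub.one_mem

end Mat

lemma Zne (n : ℕ) [NeZero n] {X : Type} [Group X] (h : Nonempty (X ≃* Multiplicative ℤ)) :
    ¬ Nonempty (X ≃* Multiplicative (ZMod n)) := by
  rintro ⟨e⟩
  obtain ⟨f⟩ := h
  have : Finite (Multiplicative ℤ) := Finite.of_equiv _ (e.symm.trans f).toEquiv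
  exact not_finite (Multiplicative ℤ)

/-- If Ŝ is a Neumann subgroup of M̂ = PGL(2,ℤ) not contained
in M = PSL(2,ℤ) with (k,l,m)-structure, then S = Ŝ ∩ M has
(2k, 2l, 2m−1)-structure. -/
theorem neumann_inter_modular_klm_structure
    (Shat : Subgroup Mhat) (h1 : IsNeumann Shat) (h2 : ¬ Shat ≤ Msub)
    (k l m : ℕ∞) (h3 : HasKLMStructure Shat k l m) :
    HasKLMStructure ↥(Shat ⊓ Msub) (2 * k) (2 * l) (2 * m - 1) := by

  obtain ⟨ι, H, inst, ⟨φ⟩, hcl, hk, hl, hm⟩ := h3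
  letI := inst
  let K : Subgroup Shat := (Shat ⊓ Msub).subgroupOf Shat
  have memK : ∀ a : Shat, a ∈ K ↔ (a : Mhat) ∈ Msub := by
    intro a
    simp [K, Subgroup.mem_subgroupOf]
  have hK : ∀ a b, a * b ∈ K ↔ (a ∈ K ↔ b ∈ K) := by
    intro a b
    rw [memK, memK, memK]
    exact Msub_mul a b
  have hne : K ≠ ⊤ := by
    intro h
    apply h2
    intro x hx
    have : (⟨x, hx⟩ : Shat) ∈ K := by rw [h]; trivial
    exact (memK _).1 this
  have tors : ∀ (n : ℕ) (i) (e : H i ≃* Multiplicative (ZMod n)) (h : H i), h ^ n = 1 := by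
    intro n i e h
    apply e.injective
    rw [map_pow, map_one]
    apply Multiplicative.toAdd.injective
    simp
  have hH : ∀ i, (∀ h : H i, φ.symm (Monoid.CoprodI.of h) ∈ K) ∨
      Nonempty (H i ≃* Multiplicative ℤ) := by
    intro i
    rcases hcl i with ⟨⟨e⟩⟩ | ⟨⟨e⟩⟩ | h
    · left
      intro h
      rw [memK]
      apply invol_mem Shat h1 _ (φ.symm (Monoid.CoprodI.of h)).2
      rw [← Subgroup.coe_mul, ← map_mul, ← map_mul, ← pow_two, tors 2 i e h]
      simp
    · left
      intro h
      have h3 : φ.symm (Monoid.CoprodI.of h) * φ.symm (Monoid.CoprodI.of h)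
          * φ.symm (Monoid.CoprodI.of h) ∈ K := by
        rw [← map_mul, ← map_mul, ← map_mul, ← map_mul, ← pow_three', tors 3 i e h]
        simp
      rw [hK, hK] at h3
      tauto
    · exact Or.inr h
  obtain ⟨i0, hi0, ⟨χ⟩⟩ := free_data φ K hK hH hne
  have eK : K ≃* ↥(Shat ⊓ Msub) := Subgroup.subgroupOfEquivOfLe inf_le_left
  have hnone : Nonempty (KFam (fun j : {i // i ≠ i0} => H j.1) none ≃* Multiplicative ℤ) :=
    ⟨MulEquiv.refl (Multiplicative ℤ)⟩
  refine ⟨Option ({i // i ≠ i0} × Bool), KFam (fun j : {i // i ≠ i0} => H j.1), KFam.grp _,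
    ⟨eK.symm.trans χ⟩, ?_, ?_, ?_, ?_⟩
  · rintro (_ | ⟨j, b⟩)
    · exact Or.inr (Or.inr hnone)
    · exact hcl j.1
  · rw [← hk]
    exact count_none (i0 := i0) _ _ (fun p => Iff.rfl) (Zne 2 hnone) (Zne 2 hi0)
  · rw [← hl]
    exact count_none (i0 := i0) _ _ (fun p => Iff.rfl) (Zne 3 hnone) (Zne 3 hi0)
  · rw [← hm]
    exact count_some (i0 := i0) _ _ (fun p => Iff.rfl) hnone hi0
end
end

section
/- For any k, l, m ∈ ℕ ∪ {∞} satisfying k + l + m = ∞ and m ≥ 1, there exists a Neumann subgroup Ŝ of M̂ = PGL(2,ℤ) with Ŝ not contained in M = PSL(2,ℤ) such that Ŝ has (k,l,m)-structure. -/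
open Matrix Pointwise

noncomputable section

inductive DT | c2 | c3 | mo

def nOf : DT → ℕ
  | .c2 => 2
  | .c3 => 3
  | .mo => 0

abbrev HH (t : DT) := Multiplicative (ZMod (nOf t))

def hgen (t : DT) : HH t := Multiplicative.ofAdd 1

lemma hgen_zpow (t : DT) (y : HH t) : ∃ k : ℤ, hgen t ^ k = y := by
  obtain ⟨k, hk⟩ := ZMod.intCast_surjective (Multiplicative.toAdd y)
  refine ⟨k, ?_⟩
  apply Multiplicative.toAdd.injective
  simp [hgen, toAdd_zpow, hk]

lemma hgen_pow (t : DT) : hgen t ^ nOf t = 1 := by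
  apply Multiplicative.toAdd.injective
  simp [hgen, toAdd_pow]

def hlift {Γ : Type*} [Group Γ] (t : DT) (x : Γ) (h : x ^ nOf t = 1) : HH t →* Γ :=
  AddMonoidHom.toMultiplicativeLeft (ZMod.lift (nOf t)
    ⟨(zpowersHom Γ x).toAdditiveRight, by
      apply Additive.toMul.injective
      simpa [zpowersHom] using h⟩)

lemma hlift_gen {Γ : Type*} [Group Γ] (t : DT) (x : Γ) (h : x ^ nOf t = 1) :
    hlift t x h (hgen t) = x := by
  have := ZMod.lift_coe (nOf t) (A := Additive Γ) ⟨(zpowersHom Γ x).toAdditiveRight, by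
      apply Additive.toMul.injective
      simpa [zpowersHom] using h⟩ 1
  simp only [Int.cast_one] at this
  simp [hlift, hgen]
  erw [this]
  simp [zpowersHom]
  rfl

section coprod
variable {ι : Type} (d : ι → DT)

abbrev PP := Monoid.CoprodI (fun i => HH (d i))

def pgen (i : ι) : PP d := Monoid.CoprodI.of (M := fun i => HH (d i)) (i := i) (hgen (d i))

lemma pgen_pow (i : ι) : pgen d i ^ nOf (d i) = 1 := by
  rw [pgen, ← map_pow, hgen_pow, map_one]

def plift {Γ : Type*} [Group Γ] (x : ι → Γ) (h : ∀ i, x i ^ nOf (d i) = 1) : PP d →* Γ :=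
  Monoid.CoprodI.lift (fun i => hlift (d i) (x i) (h i))

lemma plift_gen {Γ : Type*} [Group Γ] (x : ι → Γ) (h : ∀ i, x i ^ nOf (d i) = 1) (i : ι) :
    plift d x h (pgen d i) = x i := by
  simp [plift, pgen, hlift_gen]

lemma pclosure : Subgroup.closure (Set.range (pgen d)) = ⊤ := by
  rw [eq_top_iff]
  rintro p -
  induction p using Monoid.CoprodI.induction_on with
  | one => exact one_mem _
  | of i m =>
    obtain ⟨k, rfl⟩ := hgen_zpow _ m
    rw [map_zpow]
    exact zpow_mem (Subgroup.subset_closure (Set.mem_range_self i)) _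
  | mul x y hx hy => exact mul_mem hx hy

end coprod

lemma pr_eq_iff (g h : GL2Z) : pr g = pr h ↔ (g = h ∨ g = -h) := by
  have : pr g = pr h ↔ g⁻¹ * h ∈ pmI := QuotientGroup.eq
  rw [this]
  constructor
  · intro hm
    obtain ⟨k, hk⟩ := Subgroup.mem_zpowers_iff.mp hm
    rcases Int.even_or_odd k with e | e
    · rw [e.neg_one_zpow] at hk
      left
      rw [eq_comm, inv_mul_eq_one] at hk
      exact hk
    · rw [e.neg_one_zpow] at hk
      right
      rw [eq_comm, inv_mul_eq_iff_eq_mul] at hk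
      simp [hk]
  · rintro (rfl | rfl)
    · simp
    · have : (-h)⁻¹ * h = -1 := by
        rw [inv_mul_eq_iff_eq_mul]; simp
      rw [this]
      exact Subgroup.mem_zpowers _

lemma omega_sq : omega * omega = 1 := by
  rw [omega, ← map_mul, ← map_one pr, pr_eq_iff]
  right
  ext i j; fin_cases i <;> fin_cases j <;> simp [omegaGL]

lemma nu_sq : nu * nu = 1 := by
  rw [nu, ← map_mul, ← map_one pr, pr_eq_iff]
  left
  ext i j; fin_cases i <;> fin_cases j <;> simp [nuGL]

lemma nu_omega : nu * omega = omega * nu := by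
  rw [nu, omega, ← map_mul, ← map_mul, pr_eq_iff]
  right
  ext i j; fin_cases i <;> fin_cases j <;> simp [nuGL, omegaGL]

lemma nu_tau : nu * tau * nu = tau⁻¹ := by
  rw [eq_inv_iff_mul_eq_one]
  rw [nu, tau, ← map_mul, ← map_mul, ← map_mul, ← map_one pr, pr_eq_iff]
  left
  ext i j; fin_cases i <;> fin_cases j <;> simp [nuGL, tauGL]

lemma omega_tau : omega * tau = phi := by
  rw [omega, tau, phi, ← map_mul]
  congr 1
  ext i j; fin_cases i <;> fin_cases j <;> simp [omegaGL, tauGL, phiGL]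

lemma phi_cube : phi ^ 3 = 1 := by
  rw [phi, ← map_pow, ← map_one pr, pr_eq_iff]
  right
  rw [pow_succ, pow_two]
  ext i j; fin_cases i <;> fin_cases j <;> simp [phiGL]

lemma mem_of_det_one (R : Subgroup Mhat) (ht : tau ∈ R) (hw : omega ∈ R) (g : GL2Z)
    (hg : (g : Matrix (Fin 2) (Fin 2) ℤ).det = 1) : pr g ∈ R := by
  have h1 : Subgroup.closure {ModularGroup.S, ModularGroup.T} ≤
      R.comap (pr.comp Matrix.SpecialLinearGroup.toGL) := by
    rw [Subgroup.closure_le]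
    rintro x (rfl | rfl)
    · have : Matrix.SpecialLinearGroup.toGL ModularGroup.S = omegaGL := by
        ext i j; fin_cases i <;> fin_cases j <;> rfl
      simp only [Subgroup.coe_comap, Set.mem_preimage, MonoidHom.comp_apply, this]
      exact hw
    · have : Matrix.SpecialLinearGroup.toGL ModularGroup.T = tauGL := by
        ext i j; fin_cases i <;> fin_cases j <;> rfl
      simp only [Subgroup.coe_comap, Set.mem_preimage, MonoidHom.comp_apply, this]
      exact ht
  rw [SpecialLinearGroup.SL2Z_generators] at h1
  let s : Matrix.SpecialLinearGroup (Fin 2) ℤ := ⟨g, hg⟩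
  have h2 : pr (Matrix.SpecialLinearGroup.toGL s) ∈ R := h1 (Subgroup.mem_top s)
  have h3 : Matrix.SpecialLinearGroup.toGL s = g := by
    ext i j; rfl
  rwa [h3] at h2

lemma gens_top : Subgroup.closure {tau, nu, omega} = (⊤ : Subgroup Mhat) := by
  rw [eq_top_iff]
  rintro x -
  obtain ⟨g, rfl⟩ := QuotientGroup.mk'_surjective pmI x
  change pr g ∈ _
  have ht : tau ∈ Subgroup.closure {tau, nu, omega} := Subgroup.subset_closure (by simp)
  have hn : nu ∈ Subgroup.closure {tau, nu, omega} := Subgroup.subset_closure (by simp)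
  have hw : omega ∈ Subgroup.closure {tau, nu, omega} := Subgroup.subset_closure (by simp)
  have hu : IsUnit (g : Matrix (Fin 2) (Fin 2) ℤ).det := by
    rw [← Matrix.isUnit_iff_isUnit_det]; exact g.isUnit
  rcases Int.isUnit_iff.mp hu with h | h
  · exact mem_of_det_one _ ht hw g h
  · have : pr (nuGL * g) ∈ Subgroup.closure {tau, nu, omega} := by
      apply mem_of_det_one _ ht hw
      rw [Units.val_mul, Matrix.det_mul, h]
      simp [nuGL, Matrix.det_fin_two]
    rw [map_mul] at this
    exact (Subgroup.mul_mem_cancel_left _ hn).mp this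

lemma mem_Msub_det (g : GL2Z) (h : pr g ∈ Msub) : (g : Matrix (Fin 2) (Fin 2) ℤ).det = 1 := by
  obtain ⟨g', hg', he⟩ := h
  have h1 : (g' : Matrix (Fin 2) (Fin 2) ℤ).det = 1 := by
    have := congrArg Units.val (MonoidHom.mem_ker.mp hg')
    simpa using this
  rcases (pr_eq_iff _ _).mp he with rfl | rfl
  · exact h1
  · simpa [Matrix.det_neg] using h1

lemma tau_mem : tau ∈ Msub := ⟨tauGL, by
  change _ = _
  ext; simp [tauGL], rfl⟩
lemma omega_mem : omega ∈ Msub := ⟨omegaGL, by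
  change _ = _
  ext; simp [omegaGL], rfl⟩
lemma nu_not_mem : nu ∉ Msub := fun h => by
  have := mem_Msub_det nuGL h
  simp [nuGL, Matrix.det_fin_two] at this

def dB : Bool → DT
  | true => .c2
  | false => .c3

def xB {Γ : Type*} (w f : Γ) : Bool → Γ
  | true => w
  | false => f

lemma xB_pow {Γ : Type*} [Group Γ] (w f : Γ) (hw : w * w = 1) (hf : f ^ 3 = 1) (i : Bool) :
    xB w f i ^ nOf (dB i) = 1 := by
  cases i
  · exact hf
  · simpa [xB, dB, nOf, pow_two] using hw

def psi : PP dB →* Mhat := plift dB (xB omega phi) (xB_pow omega phi omega_sq phi_cube)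

def ppSet : Bool → Set Mhat
  | true => {x | ∃ g : GL2Z, pr g = x ∧ 0 < g 0 0 * g 1 0}
  | false => {x | ∃ g : GL2Z, pr g = x ∧ g 0 0 * g 1 0 < 0}

lemma ppdisj : Disjoint (ppSet true) (ppSet false) := by
  rw [Set.disjoint_left]
  rintro x ⟨g, rfl, hg⟩ ⟨h, he, hh⟩
  rcases (pr_eq_iff _ _).mp he with rfl | rfl
  · linarith
  · simp at hh
    linarith

lemma pp_omega (x : Mhat) (hx : x ∈ ppSet false) : omega * x ∈ ppSet true := by
  obtain ⟨g, rfl, hg⟩ := hx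
  refine ⟨omegaGL * g, by rw [map_mul]; rfl, ?_⟩
  simp [omegaGL, Matrix.mul_apply, Fin.sum_univ_two]
  linarith

lemma pp_phi (x : Mhat) (hx : x ∈ ppSet true) : phi * x ∈ ppSet false := by
  obtain ⟨g, rfl, hg⟩ := hx
  refine ⟨phiGL * g, by rw [map_mul]; rfl, ?_⟩
  simp [phiGL, Matrix.mul_apply, Fin.sum_univ_two]
  nlinarith [sq_nonneg (g 1 0)]

lemma pp_phi2 (x : Mhat) (hx : x ∈ ppSet true) : phi ^ 2 * x ∈ ppSet false := by
  obtain ⟨g, rfl, hg⟩ := hx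
  refine ⟨phiGL ^ 2 * g, by rw [map_mul, map_pow]; rfl, ?_⟩
  simp [phiGL, Matrix.mul_apply, Fin.sum_univ_two, pow_two]
  nlinarith [sq_nonneg (g 0 0)]

lemma c3_cases (y : HH .c3) : y = 1 ∨ y = hgen .c3 ∨ y = (hgen .c3) ^ 2 := by
  have : ∀ y : ZMod 3, y = 0 ∨ y = 1 ∨ y = 1 + 1 := by decide
  rw [pow_two]
  exact this y

lemma c2_cases (y : HH .c2) : y = 1 ∨ y = hgen .c2 := by
  have : ∀ y : ZMod 2, y = 0 ∨ y = 1 := by decide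
  exact this y

lemma pp3 (h3 : phi ^ nOf .c3 = 1) (y : HH .c3) (hy : y ≠ 1) (x : Mhat) (hx : x ∈ ppSet true) :
    hlift .c3 phi h3 y * x ∈ ppSet false := by
  have hg := hlift_gen .c3 phi h3
  rcases c3_cases y with rfl | rfl | rfl
  · exact absurd rfl hy
  · rw [hg]; exact pp_phi _ hx
  · rw [map_pow, hg]; exact pp_phi2 _ hx

lemma pp2 (h2 : omega ^ nOf .c2 = 1) (y : HH .c2) (hy : y ≠ 1) (x : Mhat)
    (hx : x ∈ ppSet false) : hlift .c2 omega h2 y * x ∈ ppSet true := by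
  have hg := hlift_gen .c2 omega h2
  rcases c2_cases y with rfl | rfl
  · exact absurd rfl hy
  · rw [hg]; exact pp_omega _ hx

lemma psi_inj : Function.Injective psi := by
  apply Monoid.CoprodI.lift_injective_of_ping_pong (X := ppSet)
  rotate_right
  · right
    refine ⟨false, ?_⟩
    change 3 ≤ Cardinal.mk (ZMod 3)
    simp
  · have h1 : pr phiGL ⁻¹ ∈ ppSet false := ⟨phiGL⁻¹, by rw [map_inv], by
      change (1 : ℤ) * (-1) < 0
      norm_num⟩
    rintro (_ | _)
    · exact ⟨_, h1⟩
    · exact ⟨_, pp_omega _ h1⟩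
  · rintro (_ | _) (_ | _) h
    · exact absurd rfl h
    · exact ppdisj.symm
    · exact ppdisj
    · exact absurd rfl h
  · rintro (_ | _) (_ | _) h
    · exact absurd rfl h
    · intro y hy
      rintro _ ⟨x, hx, rfl⟩
      exact pp3 _ y hy x hx
    · intro y hy
      rintro _ ⟨x, hx, rfl⟩
      exact pp2 _ y hy x hx
    · exact absurd rfl h

lemma psi_mem (p : PP dB) : psi p ∈ Msub := by
  have : p ∈ Msub.comap psi := by
    have h : Subgroup.closure (Set.range (pgen dB)) ≤ Msub.comap psi := by
      rw [Subgroup.closure_le]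
      rintro _ ⟨i, rfl⟩
      change psi (pgen dB i) ∈ Msub
      rw [psi, plift_gen]
      cases i
      · change phi ∈ Msub
        rw [← omega_tau]
        exact mul_mem omega_mem tau_mem
      · exact omega_mem
    rw [pclosure] at h
    exact h trivial
  exact this

/-- The universal property of the standard presentation of `PGL(2,ℤ)`. -/
lemma exists_hom {Γ : Type*} [Group Γ] (t n w : Γ) (hw : w * w = 1) (hn : n * n = 1)
    (hnw : n * w = w * n) (hnt : n * t * n = t⁻¹) (h3 : (w * t) ^ 3 = 1) :
    ∃ F : Mhat →* Γ, F tau = t ∧ F nu = n ∧ F omega = w := by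
  let f : PP dB →* Γ := plift dB (xB w (w * t)) (xB_pow _ _ hw h3)
  let Q : Subgroup (Mhat × Γ) := Subgroup.closure {(tau, t), (nu, n), (omega, w)}
  let pw : PP dB := pgen dB true
  let pt : PP dB := pgen dB true * pgen dB false
  have fw : f pw = w := plift_gen _ _ _ _
  have gw : psi pw = omega := plift_gen _ _ _ _
  have ft : f pt = t := by
    simp only [f, pt, map_mul, plift_gen]
    change w * (w * t) = t
    rw [← mul_assoc, hw, one_mul]
  have gt : psi pt = tau := by
    simp only [psi, pt, map_mul, plift_gen]
    change omega * phi = tau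
    rw [← omega_tau, ← mul_assoc, omega_sq, one_mul]
  have hnt' : n * t = t⁻¹ * n := by rw [← hnt, mul_assoc _ n n, hn, mul_one]
  have hnt'' : n * t⁻¹ = t * n := by
    rw [mul_inv_eq_iff_eq_mul, mul_assoc, hnt', mul_inv_cancel_left]
  have hnt1 : nu * tau = tau⁻¹ * nu := by rw [← nu_tau, mul_assoc _ nu nu, nu_sq, mul_one]
  have hnt2 : nu * tau⁻¹ = tau * nu := by
    rw [mul_inv_eq_iff_eq_mul, mul_assoc, hnt1, mul_inv_cancel_left]
  have hwi : w⁻¹ = w := inv_eq_of_mul_eq_one_left hw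
  have hni : n⁻¹ = n := inv_eq_of_mul_eq_one_left hn
  have hwi' : omega⁻¹ = omega := inv_eq_of_mul_eq_one_left omega_sq
  have hni' : nu⁻¹ = nu := inv_eq_of_mul_eq_one_left nu_sq
  have key : ∀ q ∈ Q, ∃ p : PP dB, q = (psi p, f p) ∨ q = (psi p * nu, f p * n) := by
    intro q hq
    induction hq using Subgroup.closure_induction_right with
    | one => exact ⟨1, Or.inl (by simp; rfl)⟩
    | mul_right x hx y hy ih =>
      obtain ⟨p, rfl | rfl⟩ := ih
      · rcases hy with rfl | rfl | rfl
        · exact ⟨p * pt, Or.inl (by simp [ft, gt])⟩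
        · exact ⟨p, Or.inr (by simp)⟩
        · exact ⟨p * pw, Or.inl (by simp [fw, gw])⟩
      · rcases hy with rfl | rfl | rfl
        · exact ⟨p * pt⁻¹, Or.inr (by simp [ft, gt, mul_assoc, hnt', hnt1])⟩
        · exact ⟨p, Or.inl (by simp [mul_assoc, hn, nu_sq])⟩
        · exact ⟨p * pw, Or.inr (by simp [fw, gw, mul_assoc, hnw, nu_omega])⟩
    | mul_inv_cancel x hx y hy ih =>
      obtain ⟨p, rfl | rfl⟩ := ih
      · rcases hy with rfl | rfl | rfl
        · exact ⟨p * pt⁻¹, Or.inl (by simp [ft, gt])⟩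
        · exact ⟨p, Or.inr (by simp [hni, hni'])⟩
        · exact ⟨p * pw, Or.inl (by simp [fw, gw, hwi, hwi'])⟩
      · rcases hy with rfl | rfl | rfl
        · exact ⟨p * pt, Or.inr (by simp [ft, gt, mul_assoc, hnt'', hnt2])⟩
        · exact ⟨p, Or.inl (by simp)⟩
        · exact ⟨p * pw, Or.inr (by simp [fw, gw, mul_assoc, hwi, hwi', hnw, nu_omega])⟩
  let π : Q →* Mhat := (MonoidHom.fst Mhat Γ).comp Q.subtype
  have hinj : Function.Injective π := by
    rw [injective_iff_map_eq_one]
    rintro ⟨⟨a, b⟩, hq⟩ h1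
    change a = 1 at h1
    subst h1
    obtain ⟨p, h | h⟩ := key _ hq
    · simp only [Prod.mk.injEq] at h
      have : p = 1 := psi_inj (by rw [← h.1, map_one])
      subst this
      ext <;> simp [h.2]
    · simp only [Prod.mk.injEq] at h
      exfalso
      apply nu_not_mem
      have : nu = (psi p)⁻¹ := eq_inv_of_mul_eq_one_right h.1.symm
      rw [this]
      exact inv_mem (psi_mem p)
  have q1 : ((tau, t) : Mhat × Γ) ∈ Q := Subgroup.subset_closure (by simp)
  have q2 : ((nu, n) : Mhat × Γ) ∈ Q := Subgroup.subset_closure (by simp)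
  have q3 : ((omega, w) : Mhat × Γ) ∈ Q := Subgroup.subset_closure (by simp)
  have hsurj : Function.Surjective π := by
    rw [← MonoidHom.range_eq_top, eq_top_iff, ← gens_top, Subgroup.closure_le]
    rintro x (rfl | rfl | rfl)
    · exact ⟨⟨_, q1⟩, rfl⟩
    · exact ⟨⟨_, q2⟩, rfl⟩
    · exact ⟨⟨_, q3⟩, rfl⟩
  let e : Q ≃* Mhat := MulEquiv.ofBijective π ⟨hinj, hsurj⟩
  have he : ∀ q : Q, e.symm (q : Mhat × Γ).1 = q := fun q => e.symm_apply_apply q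
  refine ⟨((MonoidHom.snd Mhat Γ).comp Q.subtype).comp e.symm.toMonoidHom, ?_, ?_, ?_⟩
  · have := he ⟨_, q1⟩
    simp at this
    simp [this]
  · have := he ⟨_, q2⟩
    simp at this
    simp [this]
  · have := he ⟨_, q3⟩
    simp at this
    simp [this]

/-- Sides of the ribbon graph. -/
inductive EE (d : ℕ → DT) : Type
  | neg (i : ℕ) : EE d
  | l0 : EE d
  | l1 : EE d
  | pos (i : ℕ) : EE d
  | aa (j : ℕ) (h : d (j + 1) = .c2) : EE d
  | b0 (j : ℕ) (h : d (j + 1) = .c3) : EE d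
  | b1 (j : ℕ) (h : d (j + 1) = .c3) : EE d
  | m0 (j : ℕ) (h : d (j + 1) = .mo) : EE d
  | m1 (j : ℕ) (h : d (j + 1) = .mo) : EE d
  | m2 (j : ℕ) (h : d (j + 1) = .mo) : EE d
  | m3 (j : ℕ) (h : d (j + 1) = .mo) : EE d

set_option linter.unusedSimpArgs false

namespace EE
variable {d : ℕ → DT}

def fst (d : ℕ → DT) (j : ℕ) : EE d :=
  match h : d (j + 1) with
  | .c2 => .aa j h
  | .c3 => .b0 j h
  | .mo => .m0 j h

def lst (d : ℕ → DT) (j : ℕ) : EE d :=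
  match h : d (j + 1) with
  | .c2 => .aa j h
  | .c3 => .b1 j h
  | .mo => .m3 j h

lemma fst2 {j : ℕ} (h : d (j + 1) = .c2) : fst d j = .aa j h := by
  unfold fst; split <;> rename_i h' <;> first | rfl | cases h.symm.trans h'
lemma fst3 {j : ℕ} (h : d (j + 1) = .c3) : fst d j = .b0 j h := by
  unfold fst; split <;> rename_i h' <;> first | rfl | cases h.symm.trans h'
lemma fstm {j : ℕ} (h : d (j + 1) = .mo) : fst d j = .m0 j h := by
  unfold fst; split <;> rename_i h' <;> first | rfl | cases h.symm.trans h'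
lemma lst2 {j : ℕ} (h : d (j + 1) = .c2) : lst d j = .aa j h := by
  unfold lst; split <;> rename_i h' <;> first | rfl | cases h.symm.trans h'
lemma lst3 {j : ℕ} (h : d (j + 1) = .c3) : lst d j = .b1 j h := by
  unfold lst; split <;> rename_i h' <;> first | rfl | cases h.symm.trans h'
lemma lstm {j : ℕ} (h : d (j + 1) = .mo) : lst d j = .m3 j h := by
  unfold lst; split <;> rename_i h' <;> first | rfl | cases h.symm.trans h'

def nxt : EE d → EE d
  | neg 0 => l0
  | neg (i + 1) => neg i
  | l0 => l1
  | l1 => pos 0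
  | pos i => fst d i
  | aa j _ => pos (j + 1)
  | b0 j h => b1 j h
  | b1 j _ => pos (j + 1)
  | m0 j h => m1 j h
  | m1 j h => m2 j h
  | m2 j h => m3 j h
  | m3 j _ => pos (j + 1)

def prv : EE d → EE d
  | neg i => neg (i + 1)
  | l0 => neg 0
  | l1 => l0
  | pos 0 => l1
  | pos (i + 1) => lst d i
  | aa j _ => pos j
  | b0 j _ => pos j
  | b1 j h => b0 j h
  | m0 j _ => pos j
  | m1 j h => m0 j h
  | m2 j h => m1 j h
  | m3 j h => m2 j h

def sg : EE d → EE d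
  | neg i => pos i
  | l0 => l1
  | l1 => l0
  | pos i => neg i
  | aa j h => aa j h
  | b0 j h => b1 j h
  | b1 j h => b0 j h
  | m0 j h => m3 j h
  | m1 j h => m2 j h
  | m2 j h => m1 j h
  | m3 j h => m0 j h

def eta : EE d → Bool
  | l0 => true
  | l1 => true
  | m1 _ _ => true
  | m2 _ _ => true
  | _ => false

def len : DT → ℕ
  | .c2 => 1
  | .c3 => 2
  | .mo => 4

def st (d : ℕ → DT) : ℕ → ℤ
  | 0 => 2
  | j + 1 => st d j + len (d (j + 1)) + 1

def ps : EE d → ℤ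
  | neg i => - i - 1
  | l0 => 0
  | l1 => 1
  | pos i => st d i
  | aa j _ => st d j + 1
  | b0 j _ => st d j + 1
  | b1 j _ => st d j + 2
  | m0 j _ => st d j + 1
  | m1 j _ => st d j + 2
  | m2 j _ => st d j + 3
  | m3 j _ => st d j + 4

lemma dcases (d : ℕ → DT) (j : ℕ) : d j = .c2 ∨ d j = .c3 ∨ d j = .mo := by
  cases d j <;> simp

lemma prv_nxt (x : EE d) : prv (nxt x) = x := by
  cases x with
  | neg i => cases i <;> rfl
  | pos i => rcases dcases d (i + 1) with h | h | h <;> simp [nxt, fst2, fst3, fstm, h, prv]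
  | aa j h => exact lst2 h
  | b1 j h => exact lst3 h
  | m3 j h => exact lstm h
  | _ => rfl

lemma nxt_prv (x : EE d) : nxt (prv x) = x := by
  cases x with
  | pos i =>
    cases i with
    | zero => rfl
    | succ i => rcases dcases d (i + 1) with h | h | h <;> simp [nxt, lst2, lst3, lstm, h, prv]
  | aa j h => exact fst2 h
  | b0 j h => exact fst3 h
  | m0 j h => exact fstm h
  | _ => rfl

lemma sg_sg (x : EE d) : sg (sg x) = x := by cases x <;> rfl
lemma eta_sg (x : EE d) : eta (sg x) = eta x := by cases x <;> rfl

lemma ps_nxt (x : EE d) : ps (nxt x) = ps x + 1 := by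
  cases x with
  | neg i => cases i <;> simp [nxt, ps] <;> ring
  | pos i => rcases dcases d (i + 1) with h | h | h <;> simp [nxt, fst2, fst3, fstm, h, ps]
  | aa j h => simp [nxt, ps, st, h, len]
  | b1 j h => simp [nxt, ps, st, h, len]
  | m3 j h => simp [nxt, ps, st, h, len]
  | _ => simp [nxt, ps, st, add_assoc]

lemma ps_prv (x : EE d) : ps (prv x) = ps x - 1 := by
  have := ps_nxt (prv x)
  rw [nxt_prv] at this
  linarith

def sp : Bool → EE d → EE d
  | false => nxt
  | true => prv

def sE : Equiv.Perm (EE d) := ⟨nxt, prv, prv_nxt, nxt_prv⟩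

lemma sE_nxt {x : EE d} (h : (sE ^ ps x) l0 = x) : (sE ^ ps (nxt x)) l0 = nxt x := by
  rw [ps_nxt, add_comm, _root_.zpow_add, zpow_one, Equiv.Perm.mul_apply, h]; rfl

lemma sE_prv {x : EE d} (h : (sE ^ ps x) l0 = x) : (sE ^ ps (prv x)) l0 = prv x := by
  rw [ps_prv, sub_eq_neg_add, _root_.zpow_add, _root_.zpow_neg_one, Equiv.Perm.mul_apply, h]; rfl

lemma sE_ps (x : EE d) : (sE ^ ps x) l0 = x := by
  have h0 : (sE ^ ps (l0 : EE d)) l0 = (l0 : EE d) := by simp [ps]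
  have h1 := sE_nxt h0
  have h2 := sE_nxt h1
  have hneg : ∀ i, (sE ^ ps (neg i : EE d)) l0 = (neg i : EE d) := by
    intro i
    induction i with
    | zero => exact sE_prv h0
    | succ i ih => exact sE_prv ih
  have hpos : ∀ i, (sE ^ ps (pos i : EE d)) l0 = (pos i : EE d) := by
    intro i
    induction i with
    | zero => exact h2
    | succ i ih =>
      have h3 := sE_nxt ih
      change (sE ^ ps (fst d i)) l0 = fst d i at h3
      rcases dcases d (i + 1) with h | h | h
      · rw [fst2 h] at h3
        exact sE_nxt h3
      · rw [fst3 h] at h3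
        exact sE_nxt (sE_nxt h3)
      · rw [fstm h] at h3
        exact sE_nxt (sE_nxt (sE_nxt (sE_nxt h3)))
  cases x with
  | neg i => exact hneg i
  | l0 => exact h0
  | l1 => exact h1
  | pos i => exact hpos i
  | aa j h =>
    have := sE_nxt (hpos j)
    rwa [show nxt (pos j) = aa j h from fst2 h] at this
  | b0 j h =>
    have := sE_nxt (hpos j)
    rwa [show nxt (pos j) = b0 j h from fst3 h] at this
  | b1 j h =>
    have := sE_nxt (hpos j)
    rw [show nxt (pos j) = b0 j h from fst3 h] at this
    exact sE_nxt this
  | m0 j h =>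
    have := sE_nxt (hpos j)
    rwa [show nxt (pos j) = m0 j h from fstm h] at this
  | m1 j h =>
    have := sE_nxt (hpos j)
    rw [show nxt (pos j) = m0 j h from fstm h] at this
    exact sE_nxt this
  | m2 j h =>
    have := sE_nxt (hpos j)
    rw [show nxt (pos j) = m0 j h from fstm h] at this
    exact sE_nxt (sE_nxt this)
  | m3 j h =>
    have := sE_nxt (hpos j)
    rw [show nxt (pos j) = m0 j h from fstm h] at this
    exact sE_nxt (sE_nxt (sE_nxt this))

lemma exists_ps (n : ℤ) : ∃ x : EE d, ps x = n := by
  induction n using Int.induction_on with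
  | zero => exact ⟨l0, rfl⟩
  | succ i ih => obtain ⟨x, hx⟩ := ih; exact ⟨nxt x, by rw [ps_nxt, hx]⟩
  | pred i ih => obtain ⟨x, hx⟩ := ih; exact ⟨prv x, by rw [ps_prv, hx]⟩

section group
variable {G : Type*} [Group G] (a : ℕ → G)

def stem (d : ℕ → DT) (j : ℕ) : G :=
  match d (j + 1) with
  | .c2 => a (j + 1)
  | .c3 => a (j + 1)
  | .mo => a (j + 1) * a (j + 1)

def nn (d : ℕ → DT) : ℕ → G
  | 0 => a 0 * a 0
  | j + 1 => stem a d j * nn d j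

def cc : EE d → G
  | neg i => nn a d i
  | l0 => a 0
  | l1 => (a 0)⁻¹
  | pos i => (nn a d i)⁻¹
  | aa j _ => a (j + 1)
  | b0 j _ => a (j + 1)
  | b1 j _ => (a (j + 1))⁻¹
  | m0 j _ => a (j + 1) * a (j + 1)
  | m1 j _ => a (j + 1)
  | m2 j _ => (a (j + 1))⁻¹
  | m3 j _ => (a (j + 1) * a (j + 1))⁻¹


lemma ha2 (ha : ∀ i, a i ^ nOf (d i) = 1) {j : ℕ} (h : d j = .c2) : a j * a j = 1 := by
  have := ha j; rw [h] at this; simpa [nOf, pow_two] using this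

lemma ha3 (ha : ∀ i, a i ^ nOf (d i) = 1) {j : ℕ} (h : d j = .c3) : a j * (a j * a j) = 1 := by
  have := ha j; rw [h] at this; simpa [nOf, pow_succ, mul_assoc] using this

lemma cc_sg (ha : ∀ i, a i ^ nOf (d i) = 1) (x : EE d) : cc a (sg x) * cc a x = 1 := by
  cases x with
  | aa j h => exact ha2 a ha h
  | _ => simp [cc, sg]

abbrev YY (d : ℕ → DT) (G : Type*) := EE d × Bool × G

lemma sp_sp (b : Bool) (x : EE d) : sp b (sp (!b) x) = x := by
  cases b <;> simp [sp, prv_nxt, nxt_prv]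

def tY (d : ℕ → DT) (G : Type*) : Equiv.Perm (YY d G) where
  toFun y := (sp y.2.1 y.1, y.2.1, y.2.2)
  invFun y := (sp (!y.2.1) y.1, y.2.1, y.2.2)
  left_inv y := by
    have := sp_sp (!y.2.1) y.1
    rw [Bool.not_not] at this
    simp [this]
  right_inv y := by simp [sp_sp]

def nY (d : ℕ → DT) (G : Type*) : Equiv.Perm (YY d G) where
  toFun y := (y.1, !y.2.1, y.2.2)
  invFun y := (y.1, !y.2.1, y.2.2)
  left_inv y := by simp
  right_inv y := by simp

def wf (y : YY d G) : YY d G := (sg y.1, xor y.2.1 (eta y.1), cc a y.1 * y.2.2)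

lemma wf_wf (ha : ∀ i, a i ^ nOf (d i) = 1) (y : YY d G) : wf a (wf a y) = y := by
  simp [wf, sg_sg, eta_sg, ← mul_assoc, cc_sg a ha]

def wY (ha : ∀ i, a i ^ nOf (d i) = 1) : Equiv.Perm (YY d G) := ⟨wf a, wf a, wf_wf a ha, wf_wf a ha⟩

lemma phiY (ha : ∀ i, a i ^ nOf (d i) = 1) (y : YY d G) : wf a (tY d G (wf a (tY d G (wf a (tY d G y))))) = y := by
  obtain ⟨x, b, g⟩ := y
  have h2 : ∀ j, d j = .c2 → ∀ g, a j * (a j * g) = g := fun j h g => by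
    rw [← mul_assoc, ha2 a ha h, one_mul]
  have h3 : ∀ j, d j = .c3 → ∀ g, a j * (a j * (a j * g)) = g := fun j h g => by
    have := ha3 a ha h
    rw [← mul_assoc] at this
    rw [← mul_assoc, ← mul_assoc, this, one_mul]
  have h3' : ∀ j, d j = .c3 → ∀ g, (a j)⁻¹ * ((a j)⁻¹ * ((a j)⁻¹ * g)) = g := fun j h g => by
    rw [inv_mul_eq_iff_eq_mul, inv_mul_eq_iff_eq_mul, inv_mul_eq_iff_eq_mul, h3 j h]
  cases b
  · cases x with
    | neg i =>
      rcases i with _ | i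
      · simp [tY, wf, sp, nxt, sg, eta, cc, prv, nn, mul_assoc]
      · rcases dcases d (i + 1) with h | h | h <;>
        simp [tY, wf, sp, nxt, sg, eta, cc, nn, stem, h, h2, fst2, fst3, fstm, mul_assoc]
    | pos i =>
      rcases dcases d (i + 1) with h | h | h <;>
      simp [tY, wf, sp, nxt, sg, eta, cc, nn, stem, h, h2, fst2, fst3, fstm, mul_assoc]
    | _ => simp [tY, wf, sp, nxt, sg, eta, cc, nn, prv, stem, *, lst2, lst3, lstm, fst2, fst3, fstm, mul_assoc]
  · cases x with
    | neg i =>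
      rcases dcases d (i + 1) with h | h | h <;>
      simp [tY, wf, sp, nxt, sg, eta, cc, prv, nn, stem, h, h2, fst2, fst3, fstm, lst2, lst3, lstm, mul_assoc]
    | pos i => 
      rcases i with _ | i
      · simp [tY, wf, sp, nxt, sg, eta, cc, prv, nn, mul_assoc]
      · rcases dcases d (i + 1) with h | h | h <;>
        simp [tY, wf, sp, nxt, sg, eta, cc, nn, prv, stem, h, h2, lst2, lst3, lstm, fst2, fst3, fstm, mul_assoc]
    | _ => simp [tY, wf, sp, nxt, sg, eta, cc, nn, prv, stem, *, lst2, lst3, lstm, fst2, fst3, fstm, mul_assoc]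
end group
end EE

lemma wtw : omega * tau * omega = tau⁻¹ * omega * tau⁻¹ := by
  have h : omega * tau * (omega * tau * (omega * tau)) = 1 := by
    have := phi_cube
    rw [← omega_tau, pow_succ, pow_two, mul_assoc] at this
    exact this
  have hwi : omega⁻¹ = omega := inv_eq_of_mul_eq_one_left omega_sq
  have h2 : omega * tau * (omega * tau) = tau⁻¹ * omega := by
    rw [← mul_assoc, mul_eq_one_iff_eq_inv] at h
    rw [h, _root_.mul_inv_rev, hwi]
  rw [← mul_assoc] at h2
  rw [← h2, mul_inv_cancel_right]

lemma nu_tau_zpow (k : ℤ) : nu * tau ^ k * nu = tau ^ (-k) := by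
  have hni : nu⁻¹ = nu := inv_eq_of_mul_eq_one_left nu_sq
  have h := conj_zpow (a := nu) (b := tau) (i := k)
  rw [hni, nu_tau, _root_.inv_zpow] at h
  rw [← h, _root_.zpow_neg]

def nuB (b : Bool) : Mhat := if b then nu else 1

lemma nuB_sq (b : Bool) : nuB b * nuB b = 1 := by
  cases b <;> simp [nuB, nu_sq]

lemma nuB_omega (b : Bool) : nuB b * omega = omega * nuB b := by
  cases b <;> simp [nuB, nu_omega]

def Gam (p q : ℤ) (b : Bool) : Mhat := tau ^ (-q) * (nuB b * omega) * tau ^ p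

lemma Gam_inv (p q : ℤ) (b : Bool) : Gam q p b * Gam p q b = 1 := by
  have h : nuB b * omega * (nuB b * omega) = 1 := by
    rw [nuB_omega, mul_assoc, ← mul_assoc (nuB b), nuB_omega, mul_assoc omega, nuB_sq, mul_one,
      omega_sq]
  calc Gam q p b * Gam p q b
      = tau ^ (-p) * (nuB b * omega * (tau ^ q * tau ^ (-q)) * (nuB b * omega)) * tau ^ p := by
        simp only [Gam, mul_assoc]
    _ = 1 := by
        rw [← _root_.zpow_add, add_neg_cancel, _root_.zpow_zero, mul_one, h, mul_one,
          ← _root_.zpow_add, neg_add_cancel, _root_.zpow_zero]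

lemma Gam_step (p q t : ℤ) : Gam (q + 1) t false * Gam p q false = Gam (p - 1) (t + 1) false := by
  calc Gam (q + 1) t false * Gam p q false
      = tau ^ (-t) * (omega * (tau ^ (q + 1) * tau ^ (-q)) * omega) * tau ^ p := by
        simp only [Gam, nuB, mul_assoc]; simp
    _ = tau ^ (-t) * (tau⁻¹ * omega * tau⁻¹) * tau ^ p := by
        rw [← _root_.zpow_add, add_neg_cancel_comm, _root_.zpow_one, wtw]
    _ = _ := by
        simp only [Gam, nuB]
        simp
        group

lemma Gam_mob (p : ℤ) : Gam p (p + 1) true * Gam p (p + 1) true = Gam (p - 1) (p + 2) false := by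
  calc Gam p (p + 1) true * Gam p (p + 1) true
      = tau ^ (-(p + 1)) * ((nu * omega) * (tau ^ p * tau ^ (-(p + 1))) * nu * omega) * tau ^ p := by
        simp only [Gam, nuB, mul_assoc]; simp
    _ = tau ^ (-(p + 1)) * (omega * (nu * tau ^ (-1 : ℤ) * nu) * omega) * tau ^ p := by
        rw [← _root_.zpow_add, nu_omega, show p + -(p + 1) = -1 by ring]
        simp only [mul_assoc]
    _ = tau ^ (-(p + 1)) * (tau⁻¹ * omega * tau⁻¹) * tau ^ p := by
        rw [nu_tau_zpow, neg_neg, _root_.zpow_one, wtw]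
    _ = _ := by
        simp only [Gam, nuB]
        simp
        group
        

lemma Gam_rot (p : ℤ) : Gam p (p + 1) false ^ 3 = 1 := by
  have h1 := Gam_step (p + 1) p p
  have h2 : Gam p (p + 1) false = (Gam (p + 1) p false)⁻¹ := eq_inv_of_mul_eq_one_right (Gam_inv _ _ _)
  rw [show p + 1 - 1 = p by ring] at h1
  rw [h2] at h1 ⊢
  rw [inv_pow, inv_eq_one, pow_succ, pow_two, h1, inv_mul_cancel]

open EE

def aM (d : ℕ → DT) : ℕ → Mhat
  | 0 => Gam 0 1 true
  | j + 1 => match d (j + 1) with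
    | .c2 => Gam (st d j + 1) (st d j + 1) false
    | .c3 => Gam (st d j + 1) (st d j + 1 + 1) false
    | .mo => Gam (st d j + 2) (st d j + 2 + 1) true

lemma aM_pow (d : ℕ → DT) (h0 : d 0 = .mo) (i : ℕ) : aM d i ^ nOf (d i) = 1 := by
  cases i with
  | zero => rw [h0]; exact pow_zero _
  | succ j =>
    rcases dcases d (j + 1) with h | h | h
    · simp [aM, h, nOf, pow_two, Gam_inv]
    · simp [aM, h, nOf, Gam_rot]
    · simp [h, nOf]

lemma nn_aM (d : ℕ → DT) (i : ℕ) : nn (aM d) d i = Gam (-i - 1) (st d i) false := by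
  induction i with
  | zero =>
    have := Gam_mob 0
    simp only [zero_add] at this
    simp [nn, aM, this, st]
  | succ i ih =>
    have key : stem (aM d) d i = Gam (st d i + 1) (st d (i + 1) - 1) false := by
      rcases dcases d (i + 1) with h | h | h
      · simp [stem, aM, h, st, len]
      · simp [stem, aM, h, st, len]; congr 1; ring
      · simp [stem, aM, h, st, len]
        rw [Gam_mob]; congr 1 <;> ring
    rw [nn, key, ih, Gam_step]
    congr 1
    · push_cast; ring
    · ring

lemma cc_aM (d : ℕ → DT) (x : EE d) : cc (aM d) x = Gam (ps x) (ps (sg x)) (eta x) := by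
  have hinv : ∀ p q b, (Gam p q b)⁻¹ = Gam q p b :=
    fun p q b => inv_eq_of_mul_eq_one_left (Gam_inv p q b)
  cases x with
  | neg i => exact nn_aM d i
  | pos i => simp [cc, nn_aM, hinv, ps, sg, eta]
  | l0 => rfl
  | l1 => simp [cc, aM, hinv, ps, sg, eta]
  | aa j h => simp [cc, aM, h, ps, sg, eta]
  | b0 j h => simp [cc, aM, h, ps, sg, eta]; congr 1; ring
  | b1 j h => simp [cc, aM, h, ps, sg, eta, hinv]; congr 1; ring
  | m0 j h => simp [cc, aM, h, ps, sg, eta]; rw [Gam_mob]; congr 1 <;> ring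
  | m1 j h => simp [cc, aM, h, ps, sg, eta]; congr 1; ring
  | m2 j h => simp [cc, aM, h, ps, sg, eta, hinv]; congr 1; ring
  | m3 j h => simp only [cc, aM, h, ps, sg, eta]; rw [Gam_mob, hinv]; congr 1 <;> ring

lemma cc_map {d : ℕ → DT} {G G' : Type*} [Group G] [Group G'] (f : G →* G') (a : ℕ → G)
    (x : EE d) : f (cc a x) = cc (fun i => f (a i)) x := by
  have hs : ∀ j, f (stem a d j) = stem (fun i => f (a i)) d j := by
    intro j
    rcases dcases d (j + 1) with h | h | h <;> simp [stem, h]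
  have hn : ∀ j, f (nn a d j) = nn (fun i => f (a i)) d j := by
    intro j
    induction j with
    | zero => simp [nn]
    | succ j ih => simp [nn, hs, ih]
  cases x <;> simp [cc, hn]

lemma exists_cc (d : ℕ → DT) (i : ℕ) :
    ∃ x : EE d, ∀ (G : Type) [Group G] (a : ℕ → G), cc a x = a i := by
  cases i with
  | zero => exact ⟨l0, fun _ _ _ => rfl⟩
  | succ j =>
    rcases dcases d (j + 1) with h | h | h
    · exact ⟨aa j h, fun _ _ _ => rfl⟩
    · exact ⟨b0 j h, fun _ _ _ => rfl⟩
    · exact ⟨m1 j h, fun _ _ _ => rfl⟩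

lemma tY_zpow {d : ℕ → DT} {G : Type*} (n : ℤ) (x : EE d) (g : G) :
    (tY d G ^ n) (x, false, g) = ((sE ^ n) x, false, g) := by
  induction n using Int.induction_on generalizing x with
  | zero => rfl
  | succ i ih =>
    rw [_root_.zpow_add, _root_.zpow_add, _root_.zpow_one, _root_.zpow_one, Equiv.Perm.mul_apply,
      Equiv.Perm.mul_apply, ← ih]
    rfl
  | pred i ih =>
    rw [_root_.zpow_sub, _root_.zpow_sub, _root_.zpow_one, _root_.zpow_one, Equiv.Perm.mul_apply,
      Equiv.Perm.mul_apply, ← ih]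
    rfl

lemma neumann_of (d : ℕ → DT) (h0 : d 0 = .mo) :
    ∃ S : Subgroup Mhat, IsNeumann S ∧ ¬ S ≤ Msub ∧ Nonempty (S ≃* PP d) := by
  have hp := pgen_pow d
  obtain ⟨F, Ft, Fn, Fw⟩ := exists_hom (tY d (PP d)) (nY d (PP d)) (wY (pgen d) hp)
    (by ext1 y; exact wf_wf _ hp y)
    (by ext1 y; simp [nY])
    (by ext1 y; simp [nY, wY, wf])
    (by
      rw [eq_inv_iff_mul_eq_one]
      ext1 y
      have := sp_sp (!y.2.1) y.1
      rw [Bool.not_not] at this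
      simp [nY, tY, this])
    (by
      ext1 y
      rw [pow_succ, pow_two]
      exact phiY _ hp y)
  let ρ : PP d →* Mhat := plift d (aM d) (aM_pow d h0)
  have ρg : ∀ x : EE d, ρ (cc (pgen d) x) = Gam (ps x) (ps (sg x)) (eta x) := by
    intro x
    rw [cc_map, ← cc_aM]
    congr 1
    funext i
    exact plift_gen _ _ _ _
  have Fnu : ∀ (b : Bool) x g, F (nuB b) (x, b, g) = (x, false, g) := by
    intro b x g
    cases b
    · simp [nuB]
    · simp [nuB, Fn, nY]
  have hF : ∀ (x : EE d) (g : PP d),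
      F (Gam (ps x) (ps (sg x)) (eta x)) (l0, false, g) = (l0, false, cc (pgen d) x * g) := by
    intro x g
    have e1 : (tY d (PP d) ^ ps x) (l0, false, g) = (x, false, g) := by
      rw [tY_zpow, sE_ps]
    have e2 : (tY d (PP d) ^ ps (sg x)) (l0, false, cc (pgen d) x * g) =
        (sg x, false, cc (pgen d) x * g) := by
      rw [tY_zpow, sE_ps]
    have e3 : wY (pgen d) hp (x, false, g) = (sg x, eta x, cc (pgen d) x * g) := by
      simp [wY, wf]
    simp only [Gam, map_mul, map_zpow, Ft, Fw, Equiv.Perm.mul_apply, e1, e3, Fnu]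
    rw [_root_.zpow_neg, Equiv.Perm.inv_eq_iff_eq, e2]
  have main : ∀ p : PP d, ∀ g, F (ρ p) (l0, false, g) = (l0, false, p * g) := by
    intro p
    have hpm : p ∈ Subgroup.closure (Set.range (pgen d)) := by rw [pclosure]; trivial
    induction hpm using Subgroup.closure_induction with
    | mem x hx =>
      obtain ⟨i, rfl⟩ := hx
      obtain ⟨x, hx⟩ := exists_cc d i
      intro g
      rw [← hx _ (pgen d), ρg, hF]
    | one => intro g; simp
    | mul x y hx hy ihx ihy =>
      intro g
      rw [map_mul, map_mul, Equiv.Perm.mul_apply, ihy, ihx, mul_assoc]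
    | inv x hx ih =>
      intro g
      rw [map_inv, map_inv, Equiv.Perm.inv_eq_iff_eq, ih, mul_inv_cancel_left]
  have hT : ∀ t ∈ That, ∀ y, (F t y).2.2 = y.2.2 := by
    intro t ht
    induction ht using Subgroup.closure_induction with
    | mem x hx =>
      intro y
      rcases hx with rfl | rfl
      · rw [Ft]; rfl
      · rw [Fn]; rfl
    | one => intro y; simp
    | mul x y hx hy ihx ihy => intro z; rw [map_mul, Equiv.Perm.mul_apply, ihx, ihy]
    | inv x hx ih =>
      intro z
      have := ih ((F x)⁻¹ z)
      rw [← Equiv.Perm.mul_apply, mul_inv_cancel, Equiv.Perm.one_apply] at this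
      rw [map_inv, ← this]
  have hinter : ∀ p, ρ p ∈ That → p = 1 := by
    intro p h
    have h1 := hT _ h (l0, false, 1)
    rw [main] at h1
    simpa using h1
  have hinj : Function.Injective ρ := by
    rw [injective_iff_map_eq_one]
    intro p h
    exact hinter p (by rw [h]; exact one_mem _)
  have tT : tau ∈ That := Subgroup.subset_closure (by simp)
  have nT : nu ∈ That := Subgroup.subset_closure (by simp)
  have nBT : ∀ b, nuB b ∈ That := by
    intro b; cases b
    · exact one_mem _
    · exact nT
  have hwi' : omega⁻¹ = omega := inv_eq_of_mul_eq_one_left omega_sq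
  have hni' : nu⁻¹ = nu := inv_eq_of_mul_eq_one_left nu_sq
  have nt : ∀ b (k : ℤ), tau ^ k * nuB b = nuB b * tau ^ (if b then -k else k) := by
    intro b k
    cases b
    · simp [nuB]
    · simp only [nuB, if_true]
      rw [← nu_tau_zpow, ← mul_assoc, ← mul_assoc, nu_sq, one_mul]
  have hcov : ∀ g : Mhat, ∃ b, ∃ n : ℤ, ∃ p, g = nuB b * tau ^ n * ρ p := by
    have ct : ∀ (k : ℤ) (y : Mhat), (∃ b, ∃ n : ℤ, ∃ p, y = nuB b * tau ^ n * ρ p) →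
        ∃ b, ∃ n : ℤ, ∃ p, tau ^ k * y = nuB b * tau ^ n * ρ p := by
      rintro k _ ⟨b, n, p, rfl⟩
      refine ⟨b, (if b then -k else k) + n, p, ?_⟩
      rw [_root_.zpow_add, ← mul_assoc, ← mul_assoc, ← mul_assoc, nt]
    have cn : ∀ (y : Mhat), (∃ b, ∃ n : ℤ, ∃ p, y = nuB b * tau ^ n * ρ p) →
        ∃ b, ∃ n : ℤ, ∃ p, nu * y = nuB b * tau ^ n * ρ p := by
      rintro _ ⟨b, n, p, rfl⟩
      refine ⟨!b, n, p, ?_⟩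
      cases b
      · simp [nuB, mul_assoc]
      · simp [nuB, mul_assoc, ← mul_assoc nu nu, nu_sq]
    have cw : ∀ (y : Mhat), (∃ b, ∃ n : ℤ, ∃ p, y = nuB b * tau ^ n * ρ p) →
        ∃ b, ∃ n : ℤ, ∃ p, omega * y = nuB b * tau ^ n * ρ p := by
      rintro _ ⟨b, n, p, rfl⟩
      obtain ⟨x, rfl⟩ := exists_ps (d := d) n
      have h1 : omega * tau ^ ps x = nuB (eta x) * tau ^ ps (sg x) * ρ (cc (pgen d) x) := by
        rw [ρg, Gam, mul_assoc, mul_assoc, ← mul_assoc (tau ^ ps (sg x)), ← _root_.zpow_add,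
          add_neg_cancel, _root_.zpow_zero, one_mul, ← mul_assoc, ← mul_assoc, nuB_sq, one_mul]
      have h2 : ∀ b c, ∃ e, nuB b * nuB c = nuB e := by
        intro b c
        refine ⟨xor b c, ?_⟩
        cases b <;> cases c <;> simp [nuB, nu_sq]
      obtain ⟨e, he⟩ := h2 b (eta x)
      refine ⟨e, ps (sg x), cc (pgen d) x * p, ?_⟩
      rw [← mul_assoc, ← mul_assoc, ← nuB_omega, mul_assoc (nuB b), h1, map_mul, ← he]
      simp only [mul_assoc]
    intro g
    have hg : g ∈ Subgroup.closure {tau, nu, omega} := by rw [gens_top]; trivial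
    induction hg using Subgroup.closure_induction_left with
    | one => exact ⟨false, 0, 1, by simp [nuB]⟩
    | mul_left x hx y hy ih =>
      rcases hx with rfl | rfl | rfl
      · simpa using ct 1 y ih
      · exact cn y ih
      · exact cw y ih
    | inv_mul_cancel x hx y hy ih =>
      rcases hx with rfl | rfl | rfl
      · simpa using ct (-1) y ih
      · rw [hni']; exact cn y ih
      · rw [hwi']; exact cw y ih
  refine ⟨ρ.range, ⟨?_, ?_⟩, ?_, ⟨(MonoidHom.ofInjective hinj).symm⟩⟩
  · rw [Set.eq_univ_iff_forall]
    intro g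
    obtain ⟨b, n, p, h⟩ := hcov g⁻¹
    refine Set.mem_mul.mpr ⟨(ρ p)⁻¹, inv_mem ⟨p, rfl⟩, (nuB b * tau ^ n)⁻¹,
      inv_mem (mul_mem (nBT b) (zpow_mem tT n)), ?_⟩
    rw [← _root_.mul_inv_rev, ← h, inv_inv]
  · rw [eq_bot_iff]
    rintro _ ⟨⟨p, rfl⟩, h⟩
    rw [hinter p h, map_one]
    exact one_mem _
  · intro hle
    have h1 : Gam 0 1 true ∈ Msub := by
      apply hle
      exact ⟨_, ρg l0⟩
    have h2 : tau ^ (-1 : ℤ) * (nu * omega) * tau ^ (0 : ℤ) ∈ Msub := h1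
    rw [Subgroup.mul_mem_cancel_right _ (zpow_mem tau_mem _),
      Subgroup.mul_mem_cancel_left _ (zpow_mem tau_mem _),
      Subgroup.mul_mem_cancel_right _ omega_mem] at h2
    exact nu_not_mem h2

lemma exists_dec (k l m : ℕ∞) (hsum : k + l + m = ⊤) (hm : 1 ≤ m) :
    ∃ d : ℕ → DT, d 0 = .mo ∧ {i | d i = .c2}.encard = k ∧ {i | d i = .c3}.encard = l ∧
      {i | d i = .mo}.encard = m := by
  have hu : ∀ n : ℕ∞, ∃ A : Set ℕ, A.encard = n := by
    intro n
    obtain ⟨t, -, ht⟩ := Set.exists_subset_encard_eq (s := (Set.univ : Set ℕ)) (k := n)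
      (by rw [Set.infinite_univ.encard_eq]; exact le_top)
    exact ⟨t, ht⟩
  obtain ⟨A, hA⟩ := hu k
  obtain ⟨B, hB⟩ := hu l
  obtain ⟨C, hC⟩ := hu m
  have hinf : Infinite (A ⊕ B ⊕ C) := by
    by_contra hcon
    rw [not_infinite_iff_finite] at hcon
    have f1 : Finite A := Finite.of_injective (Sum.inl : A → A ⊕ B ⊕ C) Sum.inl_injective
    have f2 : Finite B := Finite.of_injective (fun x : B => (Sum.inr (Sum.inl x) : A ⊕ B ⊕ C))
      (Sum.inr_injective.comp Sum.inl_injective)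
    have f3 : Finite C := Finite.of_injective (fun x : C => (Sum.inr (Sum.inr x) : A ⊕ B ⊕ C))
      (Sum.inr_injective.comp Sum.inr_injective)
    have g1 : k ≠ ⊤ := by rw [← hA]; exact (Set.toFinite A).encard_lt_top.ne
    have g2 : l ≠ ⊤ := by rw [← hB]; exact (Set.toFinite B).encard_lt_top.ne
    have g3 : m ≠ ⊤ := by rw [← hC]; exact (Set.toFinite C).encard_lt_top.ne
    simp [g1, g2, g3] at hsum
  obtain ⟨e0⟩ := nonempty_equiv_of_countable (α := ℕ) (β := A ⊕ B ⊕ C)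
  have hne : C.Nonempty := by
    rw [← Set.one_le_encard_iff_nonempty, hC]; exact hm
  obtain ⟨c, hc⟩ := hne
  let z : A ⊕ B ⊕ C := Sum.inr (Sum.inr ⟨c, hc⟩)
  let e := (Equiv.swap 0 (e0.symm z)).trans e0
  have ez : e 0 = z := by simp [e]
  let f : A ⊕ B ⊕ C → DT := Sum.elim (fun _ => .c2) (Sum.elim (fun _ => .c3) (fun _ => .mo))
  have key : ∀ (t : DT) (D : Set ℕ) (g : D → A ⊕ B ⊕ C), Function.Injective g →
      (∀ x, f x = t ↔ ∃ y, g y = x) → {i | f (e i) = t}.encard = D.encard := by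
    intro t D g hg h
    have h1 : {i | f (e i) = t} = (fun y => e.symm (g y)) '' Set.univ := by
      ext i
      simp [h, Equiv.symm_apply_eq]
    rw [h1, Function.Injective.encard_image (f := fun y => e.symm (g y))
      (e.symm.injective.comp hg), Set.encard_univ]
    rfl
  refine ⟨fun i => f (e i), by simp [ez, z, f], ?_, ?_, ?_⟩
  · rw [← hA]
    refine key _ A Sum.inl Sum.inl_injective ?_
    rintro (x | x | x) <;> simp [f]
  · rw [← hB]
    refine key _ B (fun x => Sum.inr (Sum.inl x)) (Sum.inr_injective.comp Sum.inl_injective) ?_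
    rintro (x | x | x) <;> simp [f]
  · rw [← hC]
    refine key _ C (fun x => Sum.inr (Sum.inr x)) (Sum.inr_injective.comp Sum.inr_injective) ?_
    rintro (x | x | x) <;> simp [f]

lemma nOf_of_equiv (t s : DT) : Nonempty (HH t ≃* Multiplicative (ZMod (nOf s))) ↔ t = s := by
  constructor
  · rintro ⟨e⟩
    have h : Nat.card (ZMod (nOf t)) = Nat.card (ZMod (nOf s)) := Nat.card_congr e.toEquiv
    rw [Nat.card_zmod, Nat.card_zmod] at h
    cases t <;> cases s <;> simp [nOf] at h ⊢
  · rintro rfl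
    exact ⟨MulEquiv.refl _⟩

/-- Every admissible (k,l,m)-structure (k + l + m = ∞, m ≥ 1)
is realized by some Neumann subgroup of M̂ = PGL(2,ℤ) not contained in
M = PSL(2,ℤ). -/
theorem exists_neumann_with_klm_structure
    (k l m : ℕ∞) (hsum : k + l + m = ⊤) (hm : 1 ≤ m) :
    ∃ Shat : Subgroup Mhat, IsNeumann Shat ∧ ¬ Shat ≤ Msub ∧
      HasKLMStructure Shat k l m := by
  obtain ⟨d, h0, h1, h2, h3⟩ := exists_dec k l m hsum hm
  obtain ⟨S, hS, hM, hP⟩ := neumann_of d h0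
  refine ⟨S, hS, hM, ℕ, fun i => HH (d i), fun i => inferInstance, hP, ?_, ?_, ?_, ?_⟩
  · intro i
    rcases dcases d i with h | h | h
    · exact Or.inl ((nOf_of_equiv (d i) .c2).2 h)
    · exact Or.inr (Or.inl ((nOf_of_equiv (d i) .c3).2 h))
    · exact Or.inr (Or.inr ((nOf_of_equiv (d i) .mo).2 h))
  · rw [← h1]
    congr 1
    ext i
    exact nOf_of_equiv (d i) .c2
  · rw [← h2]
    congr 1
    ext i
    exact nOf_of_equiv (d i) .c3
  · rw [← h3]
    congr 1
    ext i
    exact nOf_of_equiv (d i) .mo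
end
end
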